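/- arXiv:math/0006147 — 2 statements merged into one kernel-verified Lean document; each statement's English description precedes it below -/
import Mathlib

section
/- Let U ⊆ ℂ be open and let μ, h : U → ℂ be smooth. Then the operators ∂̄_μ and D_h commute, i.e. D_h(∂̄_μ^{(−1)} v) = ∂̄_μ^{(2)}(D_h v) on U for every smooth v : U → ℂ, if and only if D_h μ = ∂̄h on U. -/
open Complex MeasureTheory

/-- The Wirtinger derivative ∂u = (u_x − i·u_y)/2 of a function `u : ℂ → ℂ`. -/
noncomputable def wd (u : ℂ → ℂ) : ℂ → ℂ :=
  fun z => (fderiv ℝ u z 1 - Complex.I * fderiv ℝ u z Complex.I) / 2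

/-- The conjugate Wirtinger derivative ∂̄u = (u_x + i·u_y)/2. -/
noncomputable def wdbar (u : ℂ → ℂ) : ℂ → ℂ :=
  fun z => (fderiv ℝ u z 1 + Complex.I * fderiv ℝ u z Complex.I) / 2

/-- The Schwarzian derivative {f,z} = ∂³f/∂f − (3/2)·(∂²f/∂f)² of a smooth map. -/
noncomputable def schwarz (f : ℂ → ℂ) : ℂ → ℂ :=
  fun z => wd (wd (wd f)) z / wd f z - (3/2) * (wd (wd f) z / wd f z)^2

/-- The Schwarzian derivative S(g) = g'''/g' − (3/2)·(g''/g')² of a holomorphic map. -/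
noncomputable def schwarzD (g : ℂ → ℂ) : ℂ → ℂ :=
  fun z => deriv (deriv (deriv g)) z / deriv g z - (3/2) * (deriv (deriv g) z / deriv g z)^2

/-- The operator ∂̄_μ^{(k)} u = ∂̄u − μ·∂u − k·(∂μ)·u. -/
noncomputable def dbarMu (μ : ℂ → ℂ) (k : ℤ) (u : ℂ → ℂ) : ℂ → ℂ :=
  fun z => wdbar u z - μ z * wd u z - (k : ℂ) * wd μ z * u z

/-- The third-order operator D_h u = ∂³u + 2h·∂u + (∂h)·u. -/
noncomputable def Dop (h u : ℂ → ℂ) : ℂ → ℂ :=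
  fun z => wd (wd (wd u)) z + 2 * h z * wd u z + wd h z * u z

/-- The Lie derivative on weight-2 quantities: L_v q = v·∂q + 2·(∂v)·q. -/
noncomputable def lieD (v q : ℂ → ℂ) : ℂ → ℂ :=
  fun z => v z * wd q z + 2 * wd v z * q z

/-!
Differentiating `∂̄_μ^{(k)} v` once raises the weight `k` by one, at the cost of a zeroth-order
term: `∂ ∂̄_μ^{(k)} v = ∂̄_μ^{(k+1)} ∂v - k (∂²μ) v`. After three derivatives the coefficient of
`(∂²μ) ∂²v` is `-3 (k + 1)`, so for `k = -1` only terms of order at most one in `v` survive besides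
`∂̄_μ^{(2)} ∂³v`. Together with the Leibniz rule for `∂̄_μ^{(k)}` this shows that the commutator of
the two operators is `v ↦ 2 E ∂v + (∂E) v = L_v E`, where `E = D_h μ - ∂̄h = ∂³μ - ∂̄_μ^{(2)} h`.
It vanishes when `E` does; conversely, `v = w - z` gives `L_v E = 2 E` at the point `z`.
-/

section

variable {𝕜 E F : Type*} [NontriviallyNormedField 𝕜] [NormedAddCommGroup E] [NormedSpace 𝕜 E]
  [NormedAddCommGroup F] [NormedSpace 𝕜 F] {f : E → F} {x : E}

lemma contDiffAt_fderiv_apply_const {m n : WithTop ℕ∞} (hf : ContDiffAt 𝕜 n f x)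
    (hmn : m + 1 ≤ n) (a : E) : ContDiffAt 𝕜 m (fun y => fderiv 𝕜 f y a) x :=
  (hf.fderiv_right hmn).clm_apply contDiffAt_const

lemma fderiv_fderiv_apply_const (hf : DifferentiableAt 𝕜 (fderiv 𝕜 f) x) (a b : E) :
    fderiv 𝕜 (fun y => fderiv 𝕜 f y a) x b = fderiv 𝕜 (fderiv 𝕜 f) x b a := by
  simp [fderiv_clm_apply hf (differentiableAt_const a)]

end

section

open scoped Topology

variable {f g h v μ : ℂ → ℂ} {z : ℂ}

lemma wd_congr_of_eventuallyEq (hfg : f =ᶠ[𝓝 z] g) : wd f z = wd g z := by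
  simp only [wd, hfg.fderiv_eq]

lemma wd_add (hf : DifferentiableAt ℝ f z) (hg : DifferentiableAt ℝ g z) :
    wd (fun w => f w + g w) z = wd f z + wd g z := by
  simp only [wd, fderiv_fun_add hf hg, add_apply]
  ring

lemma wd_sub (hf : DifferentiableAt ℝ f z) (hg : DifferentiableAt ℝ g z) :
    wd (fun w => f w - g w) z = wd f z - wd g z := by
  simp only [wd, fderiv_fun_sub hf hg, sub_apply]
  ring

lemma wd_mul (hf : DifferentiableAt ℝ f z) (hg : DifferentiableAt ℝ g z) :
    wd (fun w => f w * g w) z = wd f z * g z + f z * wd g z := by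
  simp only [wd, fderiv_fun_mul hf hg, add_apply, smul_apply, smul_eq_mul]
  ring

lemma wd_const_mul (c : ℂ) (hf : DifferentiableAt ℝ f z) :
    wd (fun w => c * f w) z = c * wd f z := by
  simp only [wd, fderiv_const_mul hf, smul_apply, smul_eq_mul]
  ring

lemma wdbar_add (hf : DifferentiableAt ℝ f z) (hg : DifferentiableAt ℝ g z) :
    wdbar (fun w => f w + g w) z = wdbar f z + wdbar g z := by
  simp only [wdbar, fderiv_fun_add hf hg, add_apply]
  ring

lemma wdbar_mul (hf : DifferentiableAt ℝ f z) (hg : DifferentiableAt ℝ g z) :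
    wdbar (fun w => f w * g w) z = wdbar f z * g z + f z * wdbar g z := by
  simp only [wdbar, fderiv_fun_mul hf hg, add_apply, smul_apply, smul_eq_mul]
  ring

lemma wdbar_const_mul (c : ℂ) (hf : DifferentiableAt ℝ f z) :
    wdbar (fun w => c * f w) z = c * wdbar f z := by
  simp only [wdbar, fderiv_const_mul hf, smul_apply, smul_eq_mul]
  ring

lemma contDiffAt_wd {m n : WithTop ℕ∞} (hf : ContDiffAt ℝ n f z) (hmn : m + 1 ≤ n) :
    ContDiffAt ℝ m (wd f) z :=
  ((contDiffAt_fderiv_apply_const hf hmn 1).sub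
    (contDiffAt_const.mul (contDiffAt_fderiv_apply_const hf hmn I))).div_const 2

lemma contDiffAt_wdbar {m n : WithTop ℕ∞} (hf : ContDiffAt ℝ n f z) (hmn : m + 1 ≤ n) :
    ContDiffAt ℝ m (wdbar f) z :=
  ((contDiffAt_fderiv_apply_const hf hmn 1).add
    (contDiffAt_const.mul (contDiffAt_fderiv_apply_const hf hmn I))).div_const 2

lemma differentiableAt_wd (hf : ContDiffAt ℝ 2 f z) : DifferentiableAt ℝ (wd f) z :=
  (contDiffAt_wd (m := 1) hf (by norm_num)).differentiableAt (by norm_num)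

lemma differentiableAt_wdbar (hf : ContDiffAt ℝ 2 f z) : DifferentiableAt ℝ (wdbar f) z :=
  (contDiffAt_wdbar (m := 1) hf (by norm_num)).differentiableAt (by norm_num)

lemma fderiv_wd_apply (hf : DifferentiableAt ℝ (fderiv ℝ f) z) (b : ℂ) :
    fderiv ℝ (wd f) z b =
      (fderiv ℝ (fderiv ℝ f) z b 1 - I * fderiv ℝ (fderiv ℝ f) z b I) / 2 := by
  have happly (a : ℂ) : DifferentiableAt ℝ (fun w => fderiv ℝ f w a) z :=
    hf.clm_apply (differentiableAt_const a)
  unfold wd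
  simp only [div_eq_inv_mul]
  rw [fderiv_const_mul ((happly 1).fun_sub ((happly I).const_mul I)),
    fderiv_fun_sub (happly 1) ((happly I).const_mul I), fderiv_const_mul (happly I)]
  simp only [smul_apply, sub_apply, smul_eq_mul, fderiv_fderiv_apply_const hf]

lemma fderiv_wdbar_apply (hf : DifferentiableAt ℝ (fderiv ℝ f) z) (b : ℂ) :
    fderiv ℝ (wdbar f) z b =
      (fderiv ℝ (fderiv ℝ f) z b 1 + I * fderiv ℝ (fderiv ℝ f) z b I) / 2 := by
  have happly (a : ℂ) : DifferentiableAt ℝ (fun w => fderiv ℝ f w a) z :=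
    hf.clm_apply (differentiableAt_const a)
  unfold wdbar
  simp only [div_eq_inv_mul]
  rw [fderiv_const_mul ((happly 1).fun_add ((happly I).const_mul I)),
    fderiv_fun_add (happly 1) ((happly I).const_mul I), fderiv_const_mul (happly I)]
  simp only [smul_apply, add_apply, smul_eq_mul, fderiv_fderiv_apply_const hf]

lemma wd_wdbar_comm (hf : ContDiffAt ℝ 2 f z) : wd (wdbar f) z = wdbar (wd f) z := by
  have hdiff : DifferentiableAt ℝ (fderiv ℝ f) z :=
    (hf.fderiv_right (m := 1) (by norm_num)).differentiableAt (by norm_num)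
  have hsymm : fderiv ℝ (fderiv ℝ f) z 1 I = fderiv ℝ (fderiv ℝ f) z I 1 :=
    (hf.isSymmSndFDerivAt (by simp)).eq 1 I
  rw [wd, wdbar, fderiv_wdbar_apply hdiff, fderiv_wdbar_apply hdiff, fderiv_wd_apply hdiff,
    fderiv_wd_apply hdiff, hsymm]
  ring

lemma dbarMu_add (k : ℤ) (hf : DifferentiableAt ℝ f z) (hg : DifferentiableAt ℝ g z) :
    dbarMu μ k (fun w => f w + g w) z = dbarMu μ k f z + dbarMu μ k g z := by
  simp only [dbarMu, wd_add hf hg, wdbar_add hf hg]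
  ring

lemma dbarMu_const_mul (k : ℤ) (c : ℂ) (hf : DifferentiableAt ℝ f z) :
    dbarMu μ k (fun w => c * f w) z = c * dbarMu μ k f z := by
  simp only [dbarMu, wd_const_mul c hf, wdbar_const_mul c hf]
  ring

lemma dbarMu_mul {k l m : ℤ} (hklm : k + l = m) (hf : DifferentiableAt ℝ f z)
    (hg : DifferentiableAt ℝ g z) :
    dbarMu μ m (fun w => f w * g w) z = dbarMu μ k f z * g z + f z * dbarMu μ l g z := by
  subst hklm
  simp only [dbarMu, wd_mul hf hg, wdbar_mul hf hg]
  push_cast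
  ring

lemma differentiableAt_dbarMu (k : ℤ) (hμ : ContDiffAt ℝ 2 μ z) (hv : ContDiffAt ℝ 2 v z) :
    DifferentiableAt ℝ (dbarMu μ k v) z := by
  have hμ₀ : DifferentiableAt ℝ μ z := hμ.differentiableAt (by norm_num)
  have hv₀ : DifferentiableAt ℝ v z := hv.differentiableAt (by norm_num)
  exact ((differentiableAt_wdbar hv).sub (hμ₀.mul (differentiableAt_wd hv))).sub
    (((differentiableAt_wd hμ).const_mul _).mul hv₀)

lemma wd_dbarMu (k : ℤ) (hμ : ContDiffAt ℝ 2 μ z) (hv : ContDiffAt ℝ 2 v z) :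
    wd (dbarMu μ k v) z = dbarMu μ (k + 1) (wd v) z - k * (wd (wd μ) z * v z) := by
  have hμ₀ : DifferentiableAt ℝ μ z := hμ.differentiableAt (by norm_num)
  have hv₀ : DifferentiableAt ℝ v z := hv.differentiableAt (by norm_num)
  have hμ₁ := differentiableAt_wd hμ
  have hv₁ := differentiableAt_wd hv
  have hμv₁ : DifferentiableAt ℝ (fun w => μ w * wd v w) z := hμ₀.mul hv₁
  have hkμ₁ : DifferentiableAt ℝ (fun w => k * wd μ w) z := hμ₁.const_mul _
  calc wd (dbarMu μ k v) z
    _ = wd (wdbar v) z - (wd μ z * wd v z + μ z * wd (wd v) z)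
          - (k * wd (wd μ) z * v z + k * wd μ z * wd v z) := by
      unfold dbarMu
      rw [wd_sub ((differentiableAt_wdbar hv).fun_sub hμv₁) (hkμ₁.fun_mul hv₀),
        wd_sub (differentiableAt_wdbar hv) hμv₁, wd_mul hμ₀ hv₁, wd_mul hkμ₁ hv₀,
        wd_const_mul _ hμ₁]
    _ = dbarMu μ (k + 1) (wd v) z - k * (wd (wd μ) z * v z) := by
      rw [wd_wdbar_comm hv, dbarMu]
      push_cast
      ring

lemma wd_wd_dbarMu (k : ℤ) (hμ : ContDiffAt ℝ 3 μ z) (hv : ContDiffAt ℝ 3 v z) :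
    wd (wd (dbarMu μ k v)) z = dbarMu μ (k + 2) (wd (wd v)) z
      - (2 * k + 1) * (wd (wd μ) z * wd v z) - k * (wd (wd (wd μ)) z * v z) := by
  have hμ₂ : ContDiffAt ℝ 2 μ z := hμ.of_le (by norm_num)
  have hv₀ : DifferentiableAt ℝ v z := hv.differentiableAt (by norm_num)
  have hv₁ : ContDiffAt ℝ 2 (wd v) z := contDiffAt_wd hv (by norm_num)
  have hμ' : DifferentiableAt ℝ (wd (wd μ)) z :=
    differentiableAt_wd (contDiffAt_wd hμ (by norm_num))
  have hμv : DifferentiableAt ℝ (fun w => wd (wd μ) w * v w) z := hμ'.mul hv₀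
  have hfirst : wd (dbarMu μ k v) =ᶠ[𝓝 z]
      fun w => dbarMu μ (k + 1) (wd v) w - k * (wd (wd μ) w * v w) := by
    filter_upwards [hμ₂.eventually (by simp),
      (hv.of_le (m := 2) (by norm_num)).eventually (by simp)] with w using wd_dbarMu k
  rw [wd_congr_of_eventuallyEq hfirst,
    wd_sub (differentiableAt_dbarMu _ hμ₂ hv₁) (hμv.const_mul _), wd_const_mul _ hμv,
    wd_mul hμ' hv₀, wd_dbarMu _ hμ₂ hv₁, add_assoc, one_add_one_eq_two]
  push_cast
  ring

lemma wd_wd_wd_dbarMu (k : ℤ) (hμ : ContDiffAt ℝ 4 μ z) (hv : ContDiffAt ℝ 4 v z) :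
    wd (wd (wd (dbarMu μ k v))) z = dbarMu μ (k + 3) (wd (wd (wd v))) z
      - 3 * (k + 1) * (wd (wd μ) z * wd (wd v) z) - (3 * k + 1) * (wd (wd (wd μ)) z * wd v z)
      - k * (wd (wd (wd (wd μ))) z * v z) := by
  have hμ₂ : ContDiffAt ℝ 2 (wd (wd μ)) z :=
    contDiffAt_wd (contDiffAt_wd (m := 3) hμ (by norm_num)) (by norm_num)
  have hv₂ : ContDiffAt ℝ 2 (wd (wd v)) z :=
    contDiffAt_wd (contDiffAt_wd (m := 3) hv (by norm_num)) (by norm_num)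
  have hv₀ : DifferentiableAt ℝ v z := hv.differentiableAt (by norm_num)
  have hv₁ : DifferentiableAt ℝ (wd v) z := differentiableAt_wd (hv.of_le (by norm_num))
  have hμ₂' : DifferentiableAt ℝ (wd (wd μ)) z := hμ₂.differentiableAt (by norm_num)
  have hμ₃' : DifferentiableAt ℝ (wd (wd (wd μ))) z := differentiableAt_wd hμ₂
  have hdbar : DifferentiableAt ℝ (dbarMu μ (k + 2) (wd (wd v))) z :=
    differentiableAt_dbarMu _ (hμ.of_le (by norm_num)) hv₂
  have hμv₁ : DifferentiableAt ℝ (fun w => wd (wd μ) w * wd v w) z := hμ₂'.mul hv₁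
  have hμv₀ : DifferentiableAt ℝ (fun w => wd (wd (wd μ)) w * v w) z := hμ₃'.mul hv₀
  have hsecond : wd (wd (dbarMu μ k v)) =ᶠ[𝓝 z] fun w => dbarMu μ (k + 2) (wd (wd v)) w
      - (2 * k + 1) * (wd (wd μ) w * wd v w) - k * (wd (wd (wd μ)) w * v w) := by
    filter_upwards [(hμ.of_le (m := 3) (by norm_num)).eventually (by simp),
      (hv.of_le (m := 3) (by norm_num)).eventually (by simp)] with w using wd_wd_dbarMu k
  rw [wd_congr_of_eventuallyEq hsecond,
    wd_sub (hdbar.fun_sub (hμv₁.const_mul _)) (hμv₀.const_mul _),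
    wd_sub hdbar (hμv₁.const_mul _), wd_const_mul _ hμv₁, wd_const_mul _ hμv₀,
    wd_mul hμ₂' hv₁, wd_mul hμ₃' hv₀, wd_dbarMu _ (hμ.of_le (by norm_num)) hv₂,
    add_assoc k 2 1, two_add_one_eq_three]
  push_cast
  ring

lemma Dop_dbarMu_neg_one (hμ : ContDiffAt ℝ 4 μ z) (hv : ContDiffAt ℝ 4 v z) :
    Dop h (dbarMu μ (-1) v) z = dbarMu μ 2 (wd (wd (wd v))) z + 2 * h z * dbarMu μ 0 (wd v) z
      + wd h z * dbarMu μ (-1) v z + 2 * wd (wd (wd μ)) z * wd v z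
      + (wd (wd (wd (wd μ))) z + 2 * h z * wd (wd μ) z) * v z := by
  rw [Dop, wd_wd_wd_dbarMu _ hμ hv,
    wd_dbarMu _ (hμ.of_le (by norm_num)) (hv.of_le (by norm_num))]
  norm_num
  ring

lemma dbarMu_two_Dop (hh : ContDiffAt ℝ 2 h z) (hv : ContDiffAt ℝ 4 v z) :
    dbarMu μ 2 (Dop h v) z = dbarMu μ 2 (wd (wd (wd v))) z + 2 * h z * dbarMu μ 0 (wd v) z
      + wd h z * dbarMu μ (-1) v z + 2 * dbarMu μ 2 h z * wd v z
      + dbarMu μ 3 (wd h) z * v z := by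
  have hh₀ : DifferentiableAt ℝ h z := hh.differentiableAt (by norm_num)
  have hh₁ : DifferentiableAt ℝ (wd h) z := differentiableAt_wd hh
  have hv₀ : DifferentiableAt ℝ v z := hv.differentiableAt (by norm_num)
  have hv₁ : DifferentiableAt ℝ (wd v) z := differentiableAt_wd (hv.of_le (by norm_num))
  have hv₃ : DifferentiableAt ℝ (wd (wd (wd v))) z :=
    differentiableAt_wd (contDiffAt_wd (contDiffAt_wd (m := 3) hv (by norm_num)) (by norm_num))
  have hhv₁ : DifferentiableAt ℝ (fun w => 2 * h w * wd v w) z := (hh₀.const_mul 2).mul hv₁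
  have hfirst : dbarMu μ 2 (fun w => 2 * h w * wd v w) z =
      2 * dbarMu μ 2 h z * wd v z + 2 * h z * dbarMu μ 0 (wd v) z := by
    rw [← dbarMu_const_mul 2 2 hh₀]
    exact dbarMu_mul (by norm_num) (hh₀.const_mul 2) hv₁
  have hzeroth : dbarMu μ 2 (fun w => wd h w * v w) z =
      dbarMu μ 3 (wd h) z * v z + wd h z * dbarMu μ (-1) v z :=
    dbarMu_mul (by norm_num) hh₁ hv₀
  unfold Dop
  rw [dbarMu_add _ (hv₃.fun_add hhv₁) (hh₁.fun_mul hv₀), dbarMu_add _ hv₃ hhv₁, hfirst, hzeroth]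
  ring

/-- The defect `E = D_h μ - ∂̄h` of the Euler–Lagrange equation `D_h μ = ∂̄h`. -/
noncomputable def eulerLagrangeDefect (μ h : ℂ → ℂ) : ℂ → ℂ :=
  fun z => Dop h μ z - wdbar h z

lemma eulerLagrangeDefect_eq_sub_dbarMu (μ h : ℂ → ℂ) :
    eulerLagrangeDefect μ h = fun z => wd (wd (wd μ)) z - dbarMu μ 2 h z := by
  funext z
  simp only [eulerLagrangeDefect, Dop, dbarMu]
  push_cast
  ring

lemma wd_eulerLagrangeDefect (hμ : ContDiffAt ℝ 4 μ z) (hh : ContDiffAt ℝ 2 h z) :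
    wd (eulerLagrangeDefect μ h) z =
      wd (wd (wd (wd μ))) z - dbarMu μ 3 (wd h) z + 2 * h z * wd (wd μ) z := by
  have hμ₂ : ContDiffAt ℝ 2 μ z := hμ.of_le (by norm_num)
  have hμ₃ : DifferentiableAt ℝ (wd (wd (wd μ))) z :=
    differentiableAt_wd (contDiffAt_wd (contDiffAt_wd (m := 3) hμ (by norm_num)) (by norm_num))
  rw [eulerLagrangeDefect_eq_sub_dbarMu, wd_sub hμ₃ (differentiableAt_dbarMu 2 hμ₂ hh),
    wd_dbarMu 2 hμ₂ hh, two_add_one_eq_three]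
  push_cast
  ring

lemma Dop_dbarMu_sub_dbarMu_Dop (hμ : ContDiffAt ℝ 4 μ z) (hh : ContDiffAt ℝ 2 h z)
    (hv : ContDiffAt ℝ 4 v z) :
    Dop h (dbarMu μ (-1) v) z - dbarMu μ 2 (Dop h v) z = lieD v (eulerLagrangeDefect μ h) z := by
  rw [Dop_dbarMu_neg_one hμ hv, dbarMu_two_Dop hh hv, lieD, wd_eulerLagrangeDefect hμ hh,
    eulerLagrangeDefect_eq_sub_dbarMu]
  ring

lemma lieD_eq_zero_of_eventuallyEq_zero {q : ℂ → ℂ} (hq : q =ᶠ[𝓝 z] fun _ => 0) :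
    lieD v q z = 0 := by
  rw [lieD, hq.eq_of_nhds, wd_congr_of_eventuallyEq hq]
  simp [wd]

lemma wd_id_sub_const (c z : ℂ) : wd (fun w => w - c) z = 1 := by
  simp only [wd, fderiv_sub_const, fderiv_fun_id, ContinuousLinearMap.id_apply, I_mul_I]
  norm_num

lemma lieD_sub_const_self (q : ℂ → ℂ) (z : ℂ) : lieD (fun w => w - z) q z = 2 * q z := by
  simp [lieD, wd_id_sub_const]

end

theorem stmt3_general {U : Set ℂ} (hU : IsOpen U) {μ h : ℂ → ℂ} {n : WithTop ℕ∞} (hn : 4 ≤ n)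
    (hμ : ContDiffOn ℝ 4 μ U) (hh : ContDiffOn ℝ 2 h U) :
    (∀ v : ℂ → ℂ, ContDiffOn ℝ n v U →
        ∀ z ∈ U, Dop h (dbarMu μ (-1) v) z = dbarMu μ 2 (Dop h v) z)
      ↔ (∀ z ∈ U, Dop h μ z = wdbar h z) := by
  have hcomm {v : ℂ → ℂ} (hv : ContDiffOn ℝ n v U) {z : ℂ} (hz : z ∈ U) :
      Dop h (dbarMu μ (-1) v) z = dbarMu μ 2 (Dop h v) z ↔
        lieD v (eulerLagrangeDefect μ h) z = 0 := by
    have hUz := hU.mem_nhds hz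
    rw [← Dop_dbarMu_sub_dbarMu_Dop (hμ.contDiffAt hUz) (hh.contDiffAt hUz)
      ((hv.contDiffAt hUz).of_le hn), sub_eq_zero]
  constructor
  · intro H z hz
    have hv : ContDiffOn ℝ n (fun w : ℂ => w - z) U := contDiffOn_id.sub contDiffOn_const
    have hE : 2 * eulerLagrangeDefect μ h z = 0 :=
      (lieD_sub_const_self _ z).symm.trans ((hcomm hv hz).mp (H _ hv z hz))
    exact sub_eq_zero.mp ((mul_eq_zero_iff_left two_ne_zero).mp hE)
  · intro H v hv z hz
    refine (hcomm hv hz).mpr (lieD_eq_zero_of_eventuallyEq_zero ?_)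
    filter_upwards [hU.mem_nhds hz] with w hw using sub_eq_zero.mpr (H w hw)

/-- the operators `∂̄_μ` and `D_h` commute on every smooth `v` on `U`
iff the Euler–Lagrange equation `D_h μ = ∂̄h` holds on `U`. -/
theorem stmt3 (U : Set ℂ) (hU : IsOpen U) (μ h : ℂ → ℂ)
    (hμ : ContDiffOn ℝ (⊤ : ℕ∞) μ U) (hh : ContDiffOn ℝ (⊤ : ℕ∞) h U) :
    (∀ v : ℂ → ℂ, ContDiffOn ℝ (⊤ : ℕ∞) v U →
        ∀ z ∈ U, Dop h (dbarMu μ (-1) v) z = dbarMu μ 2 (Dop h v) z)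
      ↔ (∀ z ∈ U, Dop h μ z = wdbar h z) :=
  stmt3_general hU ENat.LEInfty.out (hμ.of_le ENat.LEInfty.out) (hh.of_le ENat.LEInfty.out)
end

section
/- Let μ, h : ℂ → ℂ be smooth with D_h μ = ∂̄h on ℂ. For a smooth compactly supported u : ℂ → ℂ set c(u) = 2·∫_ℂ μ·D_h u dA, and for smooth compactly supported v, w set v·c(w) = 2·∫_ℂ (∂̄_μ^{(−1)}v · D_h w + μ·L_v(D_h w)) dA, where L_v q = v·∂q + 2·(∂v)·q. Then for all smooth compactly supported v, w : ℂ → ℂ one has the cocycle identity v·c(w) − w·c(v) − c(v·∂w − w·∂v) = 0. -/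
/-!
Let `[v, w] = v·∂w − w·∂v`. Integration by parts shows that `v·c(w) = 2∫ ∂̄v·D_h w`, because the
terms of its integrand containing `μ` add up to `∂(μ·v·D_h w)`. In the antisymmetrization in `v` and
`w`, moving `∂̄` off `v` and using that `D_h` is formally skew-adjoint leaves only the commutator
`[∂̄, D_h] = 2·∂̄h·∂ + ∂∂̄h`, so that `v·c(w) − w·c(v) = −2∫ ∂̄h·[v, w]`. Skew-adjointness also
gives `c([v, w]) = −2∫ D_h μ·[v, w]`. The cocycle defect is therefore `2∫ (D_h μ − ∂̄h)·[v, w]`,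
which vanishes on shell.
-/

open Complex MeasureTheory

section IntegralFDeriv

variable {E F : Type*} [NormedAddCommGroup E] [NormedSpace ℝ E]
  [MeasurableSpace E] [BorelSpace E] [NormedAddCommGroup F] [NormedSpace ℝ F]

lemma integrable_fderiv_apply_of_hasCompactSupport {μ : Measure E} [IsFiniteMeasureOnCompacts μ]
    {u : E → F} (hu : ContDiff ℝ 1 u) (hc : HasCompactSupport u) (d : E) :
    Integrable (fun x => fderiv ℝ u x d) μ :=
  ((hu.continuous_fderiv one_ne_zero).clm_apply continuous_const).integrable_of_hasCompactSupport
    (hc.fderiv_apply (𝕜 := ℝ) d)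

lemma integral_fderiv_apply_eq_zero [FiniteDimensional ℝ E] {μ : Measure E}
    [μ.IsAddHaarMeasure] {u : E → F} (hu : ContDiff ℝ 1 u) (hc : HasCompactSupport u) (d : E) :
    ∫ x, fderiv ℝ u x d ∂μ = 0 := by
  have parts := integral_smul_fderiv_eq_neg_fderiv_smul_of_integrable (μ := μ)
    (f := fun _ => (1 : ℝ)) (g := u) (v := d) (by simp)
    (by simpa using integrable_fderiv_apply_of_hasCompactSupport hu hc d)
    (by simpa using hu.continuous.integrable_of_hasCompactSupport hc)
    (fun _ _ => differentiableAt_const _) (fun x _ => hu.differentiable one_ne_zero x)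
  simpa using parts

end IntegralFDeriv

/-- The derivative `(∂ₓ + c·∂ᵧ)/2` along a complexified tangent vector. The cases `c = -I` and
`c = I` are `∂` and `∂̄`, whose calculus is thereby developed only once. -/
noncomputable def wirtinger (c : ℂ) (u : ℂ → ℂ) : ℂ → ℂ :=
  fun z => (fderiv ℝ u z 1 + c * fderiv ℝ u z I) / 2

lemma wd_eq_wirtinger (u : ℂ → ℂ) : wd u = wirtinger (-I) u := by
  funext z
  simp only [wd, wirtinger]
  ring

lemma wdbar_eq_wirtinger (u : ℂ → ℂ) : wdbar u = wirtinger I u := rfl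

section Wirtinger

variable {c : ℂ} {u v : ℂ → ℂ} {m n : WithTop ℕ∞}

lemma wirtinger_const (a : ℂ) : wirtinger c (fun _ => a) = fun _ => 0 := by
  funext z
  simp [wirtinger]

lemma wirtinger_add (hu : Differentiable ℝ u) (hv : Differentiable ℝ v) :
    wirtinger c (fun z => u z + v z) = fun z => wirtinger c u z + wirtinger c v z := by
  funext z
  simp only [wirtinger, fderiv_fun_add (hu z) (hv z), _root_.add_apply]
  ring

lemma wirtinger_sub (hu : Differentiable ℝ u) (hv : Differentiable ℝ v) :
    wirtinger c (fun z => u z - v z) = fun z => wirtinger c u z - wirtinger c v z := by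
  funext z
  simp only [wirtinger, fderiv_fun_sub (hu z) (hv z), _root_.sub_apply]
  ring

lemma wirtinger_mul (hu : Differentiable ℝ u) (hv : Differentiable ℝ v) :
    wirtinger c (fun z => u z * v z) = fun z => wirtinger c u z * v z + u z * wirtinger c v z := by
  funext z
  simp only [wirtinger, fderiv_fun_mul (hu z) (hv z), _root_.add_apply, _root_.smul_apply,
    smul_eq_mul]
  ring

lemma contDiff_wirtinger (hu : ContDiff ℝ n u) (hmn : m + 1 ≤ n) :
    ContDiff ℝ m (wirtinger c u) := by
  have hfderiv (d : ℂ) : ContDiff ℝ m (fun z => fderiv ℝ u z d) :=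
    (hu.fderiv_right hmn).clm_apply contDiff_const
  exact ((hfderiv 1).add (contDiff_const.mul (hfderiv I))).div_const 2

lemma fderiv_wirtinger_apply (hu : ContDiff ℝ 2 u) (z e : ℂ) :
    fderiv ℝ (wirtinger c u) z e =
      (fderiv ℝ (fderiv ℝ u) z e 1 + c * fderiv ℝ (fderiv ℝ u) z e I) / 2 := by
  have hfderiv : HasFDerivAt (fderiv ℝ u) (fderiv ℝ (fderiv ℝ u) z) z :=
    ((hu.fderiv_right (m := 1) (by norm_num)).differentiable one_ne_zero z).hasFDerivAt
  have happly (d : ℂ) := hfderiv.clm_apply (hasFDerivAt_const d z)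
  have hwirtinger := ((happly 1).fun_add ((happly I).const_mul c)).mul_const (2⁻¹ : ℂ)
  have hfun : wirtinger c u = fun x => (fderiv ℝ u x 1 + c * fderiv ℝ u x I) * 2⁻¹ := by
    funext x
    rw [wirtinger, div_eq_mul_inv]
  rw [hfun, HasFDerivAt.fderiv hwirtinger]
  simp only [ContinuousLinearMap.comp_zero, zero_add, smul_add, _root_.add_apply,
    _root_.smul_apply, ContinuousLinearMap.flip_apply, smul_eq_mul]
  ring

lemma wirtinger_comm (hu : ContDiff ℝ 2 u) (c d : ℂ) :
    wirtinger c (wirtinger d u) = wirtinger d (wirtinger c u) := by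
  funext z
  have symm : fderiv ℝ (fderiv ℝ u) z 1 I = fderiv ℝ (fderiv ℝ u) z I 1 :=
    hu.contDiffAt.isSymmSndFDerivAt (by simp) 1 I
  rw [wirtinger, wirtinger]
  simp only [fderiv_wirtinger_apply hu, symm]
  ring

lemma hasCompactSupport_wirtinger (hu : HasCompactSupport u) :
    HasCompactSupport (wirtinger c u) :=
  (hu.fderiv (𝕜 := ℝ)).comp_left (g := fun φ : ℂ →L[ℝ] ℂ => (φ 1 + c * φ I) / 2) (by simp)

lemma integral_wirtinger_eq_zero (hu : ContDiff ℝ 1 u) (hc : HasCompactSupport u) :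
    ∫ z, wirtinger c u z = 0 := by
  have integrable := integrable_fderiv_apply_of_hasCompactSupport (μ := volume) hu hc
  simp only [wirtinger]
  rw [integral_div, integral_add (integrable 1) ((integrable I).const_mul c), integral_const_mul,
    integral_fderiv_apply_eq_zero hu hc, integral_fderiv_apply_eq_zero hu hc]
  simp

lemma wd_mul_s6 (hu : Differentiable ℝ u) (hv : Differentiable ℝ v) :
    wd (fun z => u z * v z) = fun z => wd u z * v z + u z * wd v z := by
  simpa only [wd_eq_wirtinger] using wirtinger_mul hu hv

lemma wdbar_mul_s6 (hu : Differentiable ℝ u) (hv : Differentiable ℝ v) :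
    wdbar (fun z => u z * v z) = fun z => wdbar u z * v z + u z * wdbar v z :=
  wirtinger_mul hu hv

lemma wdbar_wd (hu : ContDiff ℝ 2 u) : wdbar (wd u) = wd (wdbar u) := by
  simpa only [wd_eq_wirtinger, wdbar_eq_wirtinger] using wirtinger_comm hu I (-I)

lemma contDiff_wd (hu : ContDiff ℝ n u) (hmn : m + 1 ≤ n) : ContDiff ℝ m (wd u) :=
  wd_eq_wirtinger u ▸ contDiff_wirtinger hu hmn

lemma contDiff_wdbar (hu : ContDiff ℝ n u) (hmn : m + 1 ≤ n) : ContDiff ℝ m (wdbar u) :=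
  contDiff_wirtinger hu hmn

lemma continuous_wd (hu : ContDiff ℝ 1 u) : Continuous (wd u) :=
  (contDiff_wd (m := 0) hu (by norm_num)).continuous

lemma continuous_wdbar (hu : ContDiff ℝ 1 u) : Continuous (wdbar u) :=
  (contDiff_wdbar (m := 0) hu (by norm_num)).continuous

lemma hasCompactSupport_wd (hu : HasCompactSupport u) : HasCompactSupport (wd u) :=
  wd_eq_wirtinger u ▸ hasCompactSupport_wirtinger hu

lemma hasCompactSupport_wdbar (hu : HasCompactSupport u) : HasCompactSupport (wdbar u) :=
  hasCompactSupport_wirtinger hu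

lemma integral_wd_eq_zero (hu : ContDiff ℝ 1 u) (hc : HasCompactSupport u) : ∫ z, wd u z = 0 :=
  wd_eq_wirtinger u ▸ integral_wirtinger_eq_zero hu hc

lemma integral_wdbar_eq_zero (hu : ContDiff ℝ 1 u) (hc : HasCompactSupport u) :
    ∫ z, wdbar u z = 0 :=
  integral_wirtinger_eq_zero hu hc

lemma integral_mul_wdbar_eq_neg (hu : ContDiff ℝ 1 u) (hv : ContDiff ℝ 1 v)
    (hc : HasCompactSupport v) : ∫ z, u z * wdbar v z = -∫ z, wdbar u z * v z := by
  have leibniz (z : ℂ) : u z * wdbar v z + wdbar u z * v z = wdbar (fun x => u x * v x) z := by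
    rw [wdbar_mul_s6 (hu.differentiable one_ne_zero) (hv.differentiable one_ne_zero)]
    ring
  rw [← add_eq_zero_iff_eq_neg, ← integral_add]
  · simp only [leibniz]
    exact integral_wdbar_eq_zero (hu.mul hv) hc.mul_left
  · exact (hu.continuous.mul (continuous_wdbar hv)).integrable_of_hasCompactSupport
      (hasCompactSupport_wdbar hc).mul_left
  · exact ((continuous_wdbar hu).mul hv.continuous).integrable_of_hasCompactSupport hc.mul_left

end Wirtinger

/-- The Lie bracket `[v, w] = v·∂w − w·∂v` of the vector fields `v·∂` and `w·∂`. -/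
noncomputable def wdBracket (v w : ℂ → ℂ) : ℂ → ℂ :=
  fun z => v z * wd w z - w z * wd v z

section WdBracket

variable {g v w : ℂ → ℂ} {m n : WithTop ℕ∞}

lemma contDiff_wdBracket (hv : ContDiff ℝ n v) (hw : ContDiff ℝ n w) (hmn : m + 1 ≤ n) :
    ContDiff ℝ m (wdBracket v w) :=
  have hm : m ≤ n := le_self_add.trans hmn
  ((hv.of_le hm).mul (contDiff_wd hw hmn)).sub ((hw.of_le hm).mul (contDiff_wd hv hmn))

lemma hasCompactSupport_wdBracket (hw : HasCompactSupport w) :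
    HasCompactSupport (wdBracket v w) :=
  (hasCompactSupport_wd hw).mul_left.sub hw.mul_right

lemma integral_mul_wdBracket (hg : ContDiff ℝ 1 g) (hv : ContDiff ℝ 1 v)
    (hw : ContDiff ℝ 1 w) (hc : HasCompactSupport w) :
    ∫ z, g z * wdBracket v w z = ∫ z, v z * (2 * g z * wd w z + wd g z * w z) := by
  have hgv : ContDiff ℝ 1 (fun z => g z * v z) := hg.mul hv
  have hgvw : ContDiff ℝ 1 (fun z => g z * v z * w z) := hgv.mul hw
  have hcgvw : HasCompactSupport (fun z => g z * v z * w z) := hc.mul_left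
  have continuous_bracket : Continuous (wdBracket v w) :=
    (contDiff_wdBracket (m := 0) hv hw (by norm_num)).continuous
  have divergence (z : ℂ) : v z * (2 * g z * wd w z + wd g z * w z) =
      g z * wdBracket v w z + wd (fun x => g x * v x * w x) z := by
    rw [wd_mul_s6 (hgv.differentiable one_ne_zero) (hw.differentiable one_ne_zero),
      wd_mul_s6 (hg.differentiable one_ne_zero) (hv.differentiable one_ne_zero), wdBracket]
    ring
  simp only [divergence]
  rw [integral_add, integral_wd_eq_zero hgvw hcgvw, add_zero]
  · exact (hg.continuous.mul continuous_bracket).integrable_of_hasCompactSupport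
      (hasCompactSupport_wdBracket hc).mul_left
  · exact (continuous_wd hgvw).integrable_of_hasCompactSupport (hasCompactSupport_wd hcgvw)

end WdBracket

section Dop

variable {h u a b v w : ℂ → ℂ}

lemma contDiff_Dop {k m n : WithTop ℕ∞} (hh : ContDiff ℝ k h) (hu : ContDiff ℝ n u)
    (hmk : m + 1 ≤ k) (hmn : m + 3 ≤ n) : ContDiff ℝ m (Dop h u) := by
  have hu₁ : ContDiff ℝ (m + 2) (wd u) := contDiff_wd hu (by convert hmn using 1; ring)
  have hu₂ : ContDiff ℝ (m + 1) (wd (wd u)) := contDiff_wd hu₁ (by rw [add_assoc]; norm_num)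
  have hu₃ : ContDiff ℝ m (wd (wd (wd u))) := contDiff_wd hu₂ le_rfl
  exact (hu₃.add ((contDiff_const.mul (hh.of_le (le_self_add.trans hmk))).mul
    (hu₁.of_le le_self_add))).add ((contDiff_wd hh hmk).mul (hu.of_le (le_self_add.trans hmn)))

lemma continuous_Dop (hh : ContDiff ℝ 1 h) (hu : ContDiff ℝ 3 u) : Continuous (Dop h u) :=
  (contDiff_Dop (m := 0) hh hu (by norm_num) (by norm_num)).continuous

lemma hasCompactSupport_Dop (hu : HasCompactSupport u) : HasCompactSupport (Dop h u) :=
  have hwd := hasCompactSupport_wd hu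
  ((hasCompactSupport_wd (hasCompactSupport_wd hwd)).add hwd.mul_left).add hu.mul_left

/-- The bilinear concomitant of `D_h`: the primitive in Lagrange's identity for this formally
skew-adjoint operator. -/
noncomputable def concomitant (h a b : ℂ → ℂ) : ℂ → ℂ :=
  fun z => a z * wd (wd b) z + wd (wd a) z * b z - wd a z * wd b z + 2 * h z * (a z * b z)

lemma contDiff_concomitant (hh : ContDiff ℝ 1 h) (ha : ContDiff ℝ 3 a) (hb : ContDiff ℝ 3 b) :
    ContDiff ℝ 1 (concomitant h a b) := by
  have of_three {f : ℂ → ℂ} (hf : ContDiff ℝ 3 f) : ContDiff ℝ 1 f := hf.of_le (by norm_num)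
  have wd_of_three {f : ℂ → ℂ} (hf : ContDiff ℝ 3 f) : ContDiff ℝ 2 (wd f) :=
    contDiff_wd hf (by norm_num)
  have wd_one {f : ℂ → ℂ} (hf : ContDiff ℝ 3 f) : ContDiff ℝ 1 (wd f) :=
    (wd_of_three hf).of_le (by norm_num)
  have wd_wd {f : ℂ → ℂ} (hf : ContDiff ℝ 3 f) : ContDiff ℝ 1 (wd (wd f)) :=
    contDiff_wd (wd_of_three hf) (by norm_num)
  exact ((((of_three ha).mul (wd_wd hb)).add ((wd_wd ha).mul (of_three hb))).sub
    ((wd_one ha).mul (wd_one hb))).add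
      ((contDiff_const.mul hh).mul ((of_three ha).mul (of_three hb)))

lemma hasCompactSupport_concomitant (hb : HasCompactSupport b) :
    HasCompactSupport (concomitant h a b) :=
  have hwd := hasCompactSupport_wd hb
  (((hasCompactSupport_wd hwd).mul_left.add hb.mul_left).sub hwd.mul_left).add hb.mul_left.mul_left

lemma mul_Dop_add_mul_Dop (hh : ContDiff ℝ 1 h) (ha : ContDiff ℝ 3 a) (hb : ContDiff ℝ 3 b)
    (z : ℂ) : a z * Dop h b z + b z * Dop h a z = wd (concomitant h a b) z := by
  have hh' : Differentiable ℝ h := hh.differentiable one_ne_zero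
  have differentiable {f : ℂ → ℂ} (hf : ContDiff ℝ 3 f) :
      Differentiable ℝ f ∧ Differentiable ℝ (wirtinger (-I) f) ∧
        Differentiable ℝ (wirtinger (-I) (wirtinger (-I) f)) := by
    have hf₁ : ContDiff ℝ 2 (wirtinger (-I) f) := contDiff_wirtinger hf (by norm_num)
    have hf₂ : ContDiff ℝ 1 (wirtinger (-I) (wirtinger (-I) f)) :=
      contDiff_wirtinger hf₁ (by norm_num)
    exact ⟨hf.differentiable (by norm_num), hf₁.differentiable (by norm_num),
      hf₂.differentiable one_ne_zero⟩
  obtain ⟨ha₀, ha₁, ha₂⟩ := differentiable ha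
  obtain ⟨hb₀, hb₁, hb₂⟩ := differentiable hb
  unfold concomitant Dop
  simp (disch := fun_prop) only [wd_eq_wirtinger, wirtinger_add, wirtinger_sub, wirtinger_mul,
    wirtinger_const]
  ring

lemma integral_mul_Dop_eq_neg (hh : ContDiff ℝ 1 h) (ha : ContDiff ℝ 3 a) (hb : ContDiff ℝ 3 b)
    (hc : HasCompactSupport b) : ∫ z, a z * Dop h b z = -∫ z, b z * Dop h a z := by
  rw [← add_eq_zero_iff_eq_neg, ← integral_add]
  · simp only [mul_Dop_add_mul_Dop hh ha hb]
    exact integral_wd_eq_zero (contDiff_concomitant hh ha hb) (hasCompactSupport_concomitant hc)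
  · exact (ha.continuous.mul (continuous_Dop hh hb)).integrable_of_hasCompactSupport
      (hasCompactSupport_Dop hc).mul_left
  · exact (hb.continuous.mul (continuous_Dop hh ha)).integrable_of_hasCompactSupport hc.mul_right

lemma wdbar_Dop (hh : ContDiff ℝ 2 h) (hu : ContDiff ℝ 4 u) (z : ℂ) :
    wdbar (Dop h u) z =
      Dop h (wdbar u) z + (2 * wdbar h z * wd u z + wd (wdbar h) z * u z) := by
  have hu₁ : ContDiff ℝ 3 (wd u) := contDiff_wd hu (by norm_num)
  have hu₂ : ContDiff ℝ 2 (wd (wd u)) := contDiff_wd hu₁ (by norm_num)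
  have hu₃ : ContDiff ℝ 1 (wd (wd (wd u))) := contDiff_wd hu₂ (by norm_num)
  have wdbar_wd_h : wdbar (wd h) = wd (wdbar h) := wdbar_wd hh
  have wdbar_wd_u : wdbar (wd u) = wd (wdbar u) := wdbar_wd (hu.of_le (by norm_num))
  have wdbar_wd_wd_wd_u : wdbar (wd (wd (wd u))) = wd (wd (wd (wdbar u))) := by
    rw [wdbar_wd hu₂, wdbar_wd (hu₁.of_le (by norm_num)), wdbar_wd_u]
  have dh : Differentiable ℝ h := hh.differentiable (by norm_num)
  have dh₁ : Differentiable ℝ (wd h) :=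
    (contDiff_wd (m := 1) hh (by norm_num)).differentiable one_ne_zero
  have du : Differentiable ℝ u := hu.differentiable (by norm_num)
  have du₁ : Differentiable ℝ (wd u) := hu₁.differentiable (by norm_num)
  have du₃ : Differentiable ℝ (wd (wd (wd u))) := hu₃.differentiable one_ne_zero
  have expand : wdbar (Dop h u) z =
      wdbar (wd (wd (wd u))) z + (2 * wdbar h z * wd u z + 2 * h z * wdbar (wd u) z) +
        (wdbar (wd h) z * u z + wd h z * wdbar u z) := by
    unfold Dop
    simp (disch := fun_prop) only [wdbar_eq_wirtinger, wirtinger_add, wirtinger_mul,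
      wirtinger_const]
    ring
  rw [expand, wdbar_wd_wd_wd_u, wdbar_wd_u, wdbar_wd_h, Dop]
  ring

lemma integral_mul_wdbar_Dop (hh : ContDiff ℝ 2 h) (hv : ContDiff ℝ 3 v) (hw : ContDiff ℝ 4 w)
    (hc : HasCompactSupport w) :
    ∫ z, v z * wdbar (Dop h w) z =
      -(∫ z, wdbar w z * Dop h v z) + ∫ z, wdbar h z * wdBracket v w z := by
  have hh' : ContDiff ℝ 1 h := hh.of_le (by norm_num)
  have hw₁ : ContDiff ℝ 3 (wdbar w) := contDiff_wdbar hw (by norm_num)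
  have hh₁ : ContDiff ℝ 1 (wdbar h) := contDiff_wdbar hh (by norm_num)
  have hcw₁ : HasCompactSupport (wdbar w) := hasCompactSupport_wdbar hc
  have continuous_commutator :
      Continuous (fun z => 2 * wdbar h z * wd w z + wd (wdbar h) z * w z) :=
    ((continuous_const.mul hh₁.continuous).mul (continuous_wd (hw.of_le (by norm_num)))).add
      ((continuous_wd hh₁).mul hw.continuous)
  have compact_commutator :
      HasCompactSupport (fun z => 2 * wdbar h z * wd w z + wd (wdbar h) z * w z) :=
    (hasCompactSupport_wd hc).mul_left.add hc.mul_left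
  have expand (z : ℂ) : v z * wdbar (Dop h w) z = v z * Dop h (wdbar w) z +
      v z * (2 * wdbar h z * wd w z + wd (wdbar h) z * w z) := by
    rw [wdbar_Dop hh hw, mul_add]
  simp only [expand]
  rw [integral_add, integral_mul_Dop_eq_neg hh' hv hw₁ hcw₁,
    integral_mul_wdBracket hh₁ (hv.of_le (by norm_num)) (hw.of_le (by norm_num)) hc]
  · exact (hv.continuous.mul (continuous_Dop hh' hw₁)).integrable_of_hasCompactSupport
      (hasCompactSupport_Dop hcw₁).mul_left
  · exact (hv.continuous.mul continuous_commutator).integrable_of_hasCompactSupport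
      compact_commutator.mul_left

lemma integral_wdbar_mul_Dop_sub (hh : ContDiff ℝ 2 h) (hv : ContDiff ℝ 3 v)
    (hw : ContDiff ℝ 4 w) (hc : HasCompactSupport w) :
    (∫ z, wdbar v z * Dop h w z) - ∫ z, wdbar w z * Dop h v z =
      -∫ z, wdbar h z * wdBracket v w z := by
  have parts := integral_mul_wdbar_eq_neg (hv.of_le (by norm_num))
    (contDiff_Dop hh hw (by norm_num) (by norm_num)) (hasCompactSupport_Dop (h := h) hc)
  linear_combination parts - integral_mul_wdbar_Dop hh hv hw hc

end Dop

lemma integral_dbarMu_mul_add_mul_lieD {μ v q : ℂ → ℂ} (hμ : ContDiff ℝ 1 μ)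
    (hv : ContDiff ℝ 1 v) (hq : ContDiff ℝ 1 q)
    (hc : HasCompactSupport v ∨ HasCompactSupport q) :
    ∫ z, (dbarMu μ (-1) v z * q z + μ z * lieD v q z) = ∫ z, wdbar v z * q z := by
  have hμv : ContDiff ℝ 1 (fun z => μ z * v z) := hμ.mul hv
  have hμvq : ContDiff ℝ 1 (fun z => μ z * v z * q z) := hμv.mul hq
  have hcμvq : HasCompactSupport (fun z => μ z * v z * q z) :=
    hc.elim (fun h => h.mul_left.mul_right) (fun h => h.mul_left)
  have compact : HasCompactSupport (fun z => wdbar v z * q z) :=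
    hc.elim (fun h => (hasCompactSupport_wdbar h).mul_right) (fun h => h.mul_left)
  have divergence (z : ℂ) : dbarMu μ (-1) v z * q z + μ z * lieD v q z =
      wdbar v z * q z + wd (fun x => μ x * v x * q x) z := by
    rw [wd_mul_s6 (hμv.differentiable one_ne_zero) (hq.differentiable one_ne_zero),
      wd_mul_s6 (hμ.differentiable one_ne_zero) (hv.differentiable one_ne_zero), dbarMu, lieD]
    push_cast
    ring
  simp only [divergence]
  rw [integral_add, integral_wd_eq_zero hμvq hcμvq, add_zero]
  · exact ((continuous_wdbar hv).mul hq.continuous).integrable_of_hasCompactSupport compact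
  · exact (continuous_wd hμvq).integrable_of_hasCompactSupport (hasCompactSupport_wd hcμvq)

lemma integral_Dop_sub_wdbar_mul {μ h b : ℂ → ℂ} (hμ : ContDiff ℝ 3 μ) (hh : ContDiff ℝ 1 h)
    (hb : ContDiff ℝ 3 b) (hc : HasCompactSupport b) :
    ∫ z, (Dop h μ z - wdbar h z) * b z =
      -(∫ z, μ z * Dop h b z) - ∫ z, wdbar h z * b z := by
  rw [integral_mul_Dop_eq_neg hh hμ hb hc, neg_neg, ← integral_sub]
  · simp only [sub_mul, mul_comm (b _)]
  · exact (hb.continuous.mul (continuous_Dop hh hμ)).integrable_of_hasCompactSupport hc.mul_right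
  · exact ((continuous_wdbar hh).mul hb.continuous).integrable_of_hasCompactSupport hc.mul_left

theorem stmt6_general {μ h v w : ℂ → ℂ} (hμ : ContDiff ℝ 3 μ) (hh : ContDiff ℝ 2 h)
    (hv : ContDiff ℝ 4 v) (hw : ContDiff ℝ 4 w) (hc : HasCompactSupport w) :
    (2 * ∫ z, (dbarMu μ (-1) v z * Dop h w z + μ z * lieD v (Dop h w) z))
      - (2 * ∫ z, (dbarMu μ (-1) w z * Dop h v z + μ z * lieD w (Dop h v) z))
      - (2 * ∫ z, μ z * Dop h (wdBracket v w) z) =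
      2 * ∫ z, (Dop h μ z - wdbar h z) * wdBracket v w z := by
  have hμ₁ : ContDiff ℝ 1 μ := hμ.of_le (by norm_num)
  have contDiff_Dop_one {f : ℂ → ℂ} (hf : ContDiff ℝ 4 f) : ContDiff ℝ 1 (Dop h f) :=
    contDiff_Dop hh hf (by norm_num) (by norm_num)
  have action_v := integral_dbarMu_mul_add_mul_lieD hμ₁ (hv.of_le (by norm_num))
    (contDiff_Dop_one hw) (.inr (hasCompactSupport_Dop hc))
  have action_w := integral_dbarMu_mul_add_mul_lieD hμ₁ (hw.of_le (by norm_num))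
    (contDiff_Dop_one hv) (.inl hc)
  have antisymmetrized := integral_wdbar_mul_Dop_sub hh (hv.of_le (by norm_num)) hw hc
  have defect := integral_Dop_sub_wdbar_mul hμ (hh.of_le (by norm_num))
    (contDiff_wdBracket hv hw (by norm_num)) (hasCompactSupport_wdBracket (v := v) hc)
  rw [action_v, action_w]
  linear_combination 2 * antisymmetrized - 2 * defect

/-- on shell (`D_h μ = ∂̄h`), the assignment
`c(u) = 2∫ μ·D_h u dA`, with infinitesimal action
`v·c(w) = 2∫ (∂̄_μ^{(−1)}v · D_h w + μ·L_v(D_h w)) dA`, satisfies the cocycle identity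
`v·c(w) − w·c(v) − c([v,w]) = 0` for all smooth compactly supported `v, w`. -/
theorem stmt6 (μ h : ℂ → ℂ)
    (hμ : ContDiff ℝ (⊤ : ℕ∞) μ) (hh : ContDiff ℝ (⊤ : ℕ∞) h)
    (hEL : ∀ z : ℂ, Dop h μ z = wdbar h z) :
    ∀ v w : ℂ → ℂ, ContDiff ℝ (⊤ : ℕ∞) v → HasCompactSupport v →
      ContDiff ℝ (⊤ : ℕ∞) w → HasCompactSupport w →
      (2 * ∫ z : ℂ, (dbarMu μ (-1) v z * Dop h w z + μ z * lieD v (Dop h w) z))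
        - (2 * ∫ z : ℂ, (dbarMu μ (-1) w z * Dop h v z + μ z * lieD w (Dop h v) z))
        - (2 * ∫ z : ℂ, μ z * Dop h (fun x => v x * wd w x - w x * wd v x) z) = 0 := by
  intro v w hv _ hw hcw
  have of_smooth {f : ℂ → ℂ} (hf : ContDiff ℝ (⊤ : ℕ∞) f) (n : ℕ) : ContDiff ℝ n f :=
    contDiff_infty.1 hf n
  exact (stmt6_general (of_smooth hμ 3) (of_smooth hh 2) (of_smooth hv 4) (of_smooth hw 4)
    hcw).trans (by simp [hEL])
end
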